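/- Suppose rank(X_0) = r = r_A (exact-parametrization), the largest eigenvalue of A is σ_1(A) = 1, and set κ = 1/σ_r(A). Run ScaledGD with η = 1/2. If σ_r(X_0X_0ᵀ) ≥ σ_r(A)/3 and ‖X_0X_0ᵀ − A‖_F ≤ 2/(3κ²), then for every t ≥ 0, ‖X_{t+1}X_{t+1}ᵀ − A‖_F ≤ (4/(3κ²)) · 2^{−2^{t+1}} (quadratic convergence to the global optimum of min_X ‖XXᵀ − A‖_F²). -/

import Mathlib

open Matrix BigOperators

/-- `kthEig M k` is the `k`-th largest eigenvalue of a real symmetric matrix `M`,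
via the Courant–Fischer max-min characterization. -/
noncomputable def kthEig {n : ℕ} (M : Matrix (Fin n) (Fin n) ℝ) (k : ℕ) : ℝ :=
  sSup {c : ℝ | ∃ V : Submodule ℝ (Fin n → ℝ), Module.finrank ℝ V = k ∧
    ∀ x ∈ V, c * (∑ i, x i ^ 2) ≤ ∑ i, x i * (M *ᵥ x) i}

/-- The Frobenius norm of a real matrix. -/
noncomputable def frobNorm {m n : ℕ} (M : Matrix (Fin m) (Fin n) ℝ) : ℝ :=
  Real.sqrt (∑ i, ∑ j, (M i j) ^ 2)

lemma kth_le {m r : ℕ} (Q : Matrix (Fin m) (Fin r) ℝ) (hQ : Qᵀ * Q = 1)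
    (M : Matrix (Fin r) (Fin r) ℝ) (hM : ∀ y, 0 ≤ y ⬝ᵥ (M *ᵥ y)) (c : ℝ)
    (V : Submodule ℝ (Fin m → ℝ)) (hV : Module.finrank ℝ V = r)
    (h : ∀ x ∈ V, c * (∑ i, x i ^ 2) ≤ ∑ i, x i * ((Q * M * Qᵀ) *ᵥ x) i)
    (y : Fin r → ℝ) : c * (y ⬝ᵥ y) ≤ y ⬝ᵥ (M *ᵥ y) := by
  have hyy : 0 ≤ y ⬝ᵥ y := by
    simp only [dotProduct]; exact Finset.sum_nonneg fun i _ => mul_self_nonneg _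
  rcases le_or_gt c 0 with hc | hc
  · exact (mul_nonpos_of_nonpos_of_nonneg hc hyy).trans (hM y)
  have h' : ∀ x ∈ V, c * (x ⬝ᵥ x) ≤ (Qᵀ *ᵥ x) ⬝ᵥ (M *ᵥ (Qᵀ *ᵥ x)) := by
    intro x hx
    have h1 := h x hx
    have e1 : ∑ i, x i ^ 2 = x ⬝ᵥ x := by simp [dotProduct, sq]
    have e2 : ∑ i, x i * ((Q * M * Qᵀ) *ᵥ x) i = (Qᵀ *ᵥ x) ⬝ᵥ (M *ᵥ (Qᵀ *ᵥ x)) := by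
      change x ⬝ᵥ ((Q * M * Qᵀ) *ᵥ x) = _
      rw [← mulVec_mulVec, ← mulVec_mulVec, dotProduct_mulVec, mulVec_transpose]
    rwa [e1, e2] at h1
  let f : V →ₗ[ℝ] (Fin r → ℝ) := (Matrix.mulVecLin Qᵀ).comp V.subtype
  have hinj : Function.Injective f := by
    rw [injective_iff_map_eq_zero]
    rintro ⟨x, hx⟩ hfx
    have hfx' : Qᵀ *ᵥ x = 0 := hfx
    have h2 := h' x hx
    rw [hfx'] at h2
    simp only [zero_dotProduct] at h2
    have : x ⬝ᵥ x = 0 := by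
      have : 0 ≤ x ⬝ᵥ x := by
        simp only [dotProduct]; exact Finset.sum_nonneg fun i _ => mul_self_nonneg _
      nlinarith
    have := dotProduct_self_eq_zero.mp this
    simpa using this
  have hsurj : Function.Surjective f :=
    (LinearMap.injective_iff_surjective_of_finrank_eq_finrank (by simpa using hV)).mp hinj
  obtain ⟨⟨x, hx⟩, hxy⟩ := hsurj y
  have hxy' : Qᵀ *ᵥ x = y := hxy
  have h3 := h' x hx
  rw [hxy'] at h3
  refine le_trans (mul_le_mul_of_nonneg_left ?_ hc.le) h3
  -- |y|² ≤ |x|²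
  have h4 : 0 ≤ (x - Q *ᵥ y) ⬝ᵥ (x - Q *ᵥ y) := by
    simp only [dotProduct]; exact Finset.sum_nonneg fun i _ => mul_self_nonneg _
  have e3 : x ⬝ᵥ (Q *ᵥ y) = y ⬝ᵥ y := by
    rw [dotProduct_mulVec, ← mulVec_transpose, hxy']
  have e4 : (Q *ᵥ y) ⬝ᵥ (Q *ᵥ y) = y ⬝ᵥ y := by
    rw [dotProduct_mulVec, ← mulVec_transpose, mulVec_mulVec, hQ, one_mulVec]
  rw [sub_dotProduct, dotProduct_sub, dotProduct_sub, e4, e3, dotProduct_comm (Q *ᵥ y) x, e3] at h4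
  linarith

lemma dp_nonneg {n : ℕ} (x : Fin n → ℝ) : 0 ≤ x ⬝ᵥ x := by
  simp only [dotProduct]; exact Finset.sum_nonneg fun i _ => mul_self_nonneg _

lemma kthEig_le {m r : ℕ} (Q : Matrix (Fin m) (Fin r) ℝ) (hQ : Qᵀ * Q = 1)
    (M : Matrix (Fin r) (Fin r) ℝ) (hM : ∀ y, 0 ≤ y ⬝ᵥ (M *ᵥ y))
    (y : Fin r → ℝ) : kthEig (Q * M * Qᵀ) r * (y ⬝ᵥ y) ≤ y ⬝ᵥ (M *ᵥ y) := by
  rcases (dp_nonneg y).eq_or_lt with h0 | h0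
  · rw [← h0, mul_zero]; exact hM y
  rw [← le_div_iff₀ h0]
  apply Real.sSup_le
  · rintro c ⟨V, hV, h⟩
    rw [le_div_iff₀ h0]
    exact kth_le Q hQ M hM c V hV h y
  · exact div_nonneg (hM y) h0.le

lemma frob_sq {m n : ℕ} (M : Matrix (Fin m) (Fin n) ℝ) :
    frobNorm M ^ 2 = (Mᵀ * M).trace := by
  rw [frobNorm, Real.sq_sqrt (by positivity)]
  simp only [trace, diag, mul_apply, transpose_apply]
  rw [Finset.sum_comm]
  simp [sq]

lemma frob_nonneg {m n : ℕ} (M : Matrix (Fin m) (Fin n) ℝ) : 0 ≤ frobNorm M := Real.sqrt_nonneg _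

lemma frob_conj {m r : ℕ} (Q : Matrix (Fin m) (Fin r) ℝ) (hQ : Qᵀ * Q = 1)
    (M : Matrix (Fin r) (Fin r) ℝ) : frobNorm (Q * M * Qᵀ) = frobNorm M := by
  rw [← sq_eq_sq₀ (frob_nonneg _) (frob_nonneg _), frob_sq, frob_sq]
  simp only [transpose_mul, transpose_transpose]
  have : Q * (Mᵀ * Qᵀ) * (Q * M * Qᵀ) = Q * (Mᵀ * M * Qᵀ) := by
    simp only [Matrix.mul_assoc]
    rw [← Matrix.mul_assoc Qᵀ Q, hQ, Matrix.one_mul]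
  rw [this, trace_mul_comm, Matrix.mul_assoc, hQ, Matrix.mul_one]

lemma frob_mul {l m n : ℕ} (M : Matrix (Fin l) (Fin m) ℝ) (N : Matrix (Fin m) (Fin n) ℝ) :
    frobNorm (M * N) ≤ frobNorm M * frobNorm N := by
  unfold frobNorm
  rw [← Real.sqrt_mul (by positivity)]
  apply Real.sqrt_le_sqrt
  rw [Finset.sum_mul]
  apply Finset.sum_le_sum
  intro i _
  rw [Finset.sum_comm (f := fun i j => N i j ^ 2), Finset.mul_sum]
  apply Finset.sum_le_sum
  intro j _
  rw [mul_apply]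
  exact Finset.sum_mul_sq_le_sq_mul_sq _ _ _

lemma frob_transpose {m n : ℕ} (M : Matrix (Fin m) (Fin n) ℝ) :
    frobNorm Mᵀ = frobNorm M := by
  unfold frobNorm
  rw [Finset.sum_comm]
  simp

lemma frob_smul {m n : ℕ} (c : ℝ) (hc : 0 ≤ c) (M : Matrix (Fin m) (Fin n) ℝ) :
    frobNorm (c • M) = c * frobNorm M := by
  rw [← sq_eq_sq₀ (frob_nonneg _) (mul_nonneg hc (frob_nonneg _)), mul_pow, frob_sq, frob_sq]
  simp [trace_smul]; ring

lemma frob_cols {m n : ℕ} (M : Matrix (Fin m) (Fin n) ℝ) :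
    frobNorm M ^ 2 = ∑ j, (M.col j) ⬝ᵥ (M.col j) := by
  rw [frob_sq]
  simp [trace, mul_apply, dotProduct, col]

lemma vec_bound {r : ℕ} (Φ : Matrix (Fin r) (Fin r) ℝ) (hΦ : IsUnit Φ.det) (l : ℝ) (hl : 0 < l)
    (h : ∀ y, l * (y ⬝ᵥ y) ≤ (Φᵀ *ᵥ y) ⬝ᵥ (Φᵀ *ᵥ y)) (e : Fin r → ℝ) :
    l * ((Φ⁻¹ *ᵥ e) ⬝ᵥ (Φ⁻¹ *ᵥ e)) ≤ e ⬝ᵥ e := by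
  set g := Φ⁻¹ *ᵥ e with hg
  set y := (Φᵀ)⁻¹ *ᵥ g with hy
  have hgy : Φᵀ *ᵥ y = g := by
    rw [hy, mulVec_mulVec, mul_nonsing_inv _ (by simpa using hΦ), one_mulVec]
  have hge : Φ *ᵥ g = e := by
    rw [hg, mulVec_mulVec, mul_nonsing_inv _ hΦ, one_mulVec]
  have h1 := h y
  rw [hgy] at h1
  have h2 : g ⬝ᵥ g = e ⬝ᵥ y := by
    calc g ⬝ᵥ g = (Φᵀ *ᵥ y) ⬝ᵥ g := by rw [hgy]
      _ = e ⬝ᵥ y := by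
        rw [mulVec_transpose, ← dotProduct_mulVec, hge, dotProduct_comm]
  have h3 : (e ⬝ᵥ y) ^ 2 ≤ (e ⬝ᵥ e) * (y ⬝ᵥ y) := by
    have := Finset.sum_mul_sq_le_sq_mul_sq Finset.univ e y
    simpa only [dotProduct, sq] using this
  rw [← h2] at h3
  rcases (dp_nonneg g).eq_or_lt with h0 | h0
  · rw [← h0, mul_zero]; exact dp_nonneg e
  have h4 : (e ⬝ᵥ e) * (l * (y ⬝ᵥ y)) ≤ (e ⬝ᵥ e) * (g ⬝ᵥ g) :=
    mul_le_mul_of_nonneg_left h1 (dp_nonneg e)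
  have h5 : (l * (g ⬝ᵥ g)) * (g ⬝ᵥ g) ≤ (e ⬝ᵥ e) * (g ⬝ᵥ g) := by nlinarith
  exact le_of_mul_le_mul_right h5 h0

lemma unit_of_bound {r : ℕ} (Φ : Matrix (Fin r) (Fin r) ℝ) (l : ℝ) (hl : 0 < l)
    (h : ∀ y, l * (y ⬝ᵥ y) ≤ (Φᵀ *ᵥ y) ⬝ᵥ (Φᵀ *ᵥ y)) : IsUnit Φ.det := by
  rw [isUnit_iff_ne_zero]
  intro h0
  rw [← det_transpose] at h0
  obtain ⟨v, hv, hv'⟩ := exists_mulVec_eq_zero_iff.mpr h0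
  have := h v
  rw [hv', zero_dotProduct] at this
  apply hv
  apply dotProduct_self_eq_zero.mp
  nlinarith [dp_nonneg v]

lemma step_eq {r : ℕ} (Φ D : Matrix (Fin r) (Fin r) ℝ) (hD : Dᵀ = D) (hΦ : IsUnit Φ.det)
    (Ψ : Matrix (Fin r) (Fin r) ℝ)
    (hΨ : Ψ = Φ - (1 / 2 : ℝ) • ((Φ * Φᵀ - D) * Φ * (Φᵀ * Φ)⁻¹)) :
    Ψ * Ψᵀ = D + (1 / 4 : ℝ) • ((Φ⁻¹ * (Φ * Φᵀ - D))ᵀ * (Φ⁻¹ * (Φ * Φᵀ - D))) := by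
  have h1 : Φ * Φ⁻¹ = 1 := mul_nonsing_inv _ hΦ
  have h2 : Φ⁻¹ * Φ = 1 := nonsing_inv_mul _ hΦ
  have h3 : (Φ⁻¹)ᵀ * Φᵀ = 1 := by rw [← transpose_mul, h1, transpose_one]
  have h4 : Φᵀ * (Φ⁻¹)ᵀ = 1 := by rw [← transpose_mul, h2, transpose_one]
  have e : Ψ = (1 / 2 : ℝ) • (Φ + D * (Φ⁻¹)ᵀ) := by
    rw [hΨ, Matrix.mul_inv_rev, ← transpose_nonsing_inv]
    have : (Φ * Φᵀ - D) * Φ * (Φ⁻¹ * (Φ⁻¹)ᵀ) = Φ - D * (Φ⁻¹)ᵀ := by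
      rw [Matrix.mul_assoc, ← Matrix.mul_assoc Φ, h1, Matrix.one_mul, Matrix.sub_mul,
        Matrix.mul_assoc, h4, Matrix.mul_one]
    rw [this]
    module
  rw [e]
  have e2 : Φ⁻¹ * (Φ * Φᵀ - D) = Φᵀ - Φ⁻¹ * D := by
    rw [Matrix.mul_sub, ← Matrix.mul_assoc, h2, Matrix.one_mul]
  rw [e2]
  simp only [transpose_smul, transpose_add, transpose_sub, transpose_mul, transpose_transpose, hD,
    Matrix.smul_mul, Matrix.mul_smul, Matrix.add_mul, Matrix.mul_add, Matrix.sub_mul,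
    Matrix.mul_sub]
  have e3 : Φ * (Φ⁻¹ * D) = D := by rw [← Matrix.mul_assoc, h1, Matrix.one_mul]
  have e4 : D * (Φ⁻¹)ᵀ * Φᵀ = D := by rw [Matrix.mul_assoc, h3, Matrix.mul_one]
  rw [e3, e4]
  module

lemma step_frob {r : ℕ} (Φ E : Matrix (Fin r) (Fin r) ℝ) (hΦ : IsUnit Φ.det) (l : ℝ) (hl : 0 < l)
    (h : ∀ y, l * (y ⬝ᵥ y) ≤ (Φᵀ *ᵥ y) ⬝ᵥ (Φᵀ *ᵥ y)) :
    l * frobNorm ((1 / 4 : ℝ) • ((Φ⁻¹ * E)ᵀ * (Φ⁻¹ * E))) ≤ (1/4) * frobNorm E ^ 2 := by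
  rw [frob_smul _ (by norm_num)]
  have h1 := frob_mul (Φ⁻¹ * E)ᵀ (Φ⁻¹ * E)
  rw [frob_transpose, ← sq] at h1
  have h2 : l * frobNorm (Φ⁻¹ * E) ^ 2 ≤ frobNorm E ^ 2 := by
    rw [frob_cols, frob_cols, Finset.mul_sum]
    apply Finset.sum_le_sum
    intro j _
    exact vec_bound Φ hΦ l hl h (E.col j)
  nlinarith

/-- Phase 2 (quadratic convergence) for ScaledGD with step size `η = 1/2` on symmetric
exact-parametrized matrix factorization: if `σ_1(A) = 1`, `κ = 1/σ_r(A)`,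
`σ_r(X_0X_0ᵀ) ≥ σ_r(A)/3` and `‖X_0X_0ᵀ − A‖_F ≤ 2/(3κ²)`, then for all `t ≥ 0`,
`‖X_{t+1}X_{t+1}ᵀ − A‖_F ≤ (4/(3κ²)) ⬝ 2^{−2^{t+1}}`. -/
theorem stmt_3
    (m r : ℕ) (hr : 0 < r)
    (A : Matrix (Fin m) (Fin m) ℝ)
    (Q : Matrix (Fin m) (Fin r) ℝ) (d : Fin r → ℝ)
    (hQ : Qᵀ * Q = 1)
    (hd : ∀ i, 0 < d i)
    (hdmono : ∀ i j : Fin r, i ≤ j → d j ≤ d i)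
    (hA : A = Q * Matrix.diagonal d * Qᵀ)
    (hσ1 : kthEig A 1 = 1)
    (κ : ℝ) (hκ : κ = 1 / kthEig A r)
    (Ω : Matrix (Fin m) (Fin r) ℝ)
    (X : ℕ → Matrix (Fin m) (Fin r) ℝ)
    (hX0 : X 0 = A * Ω)
    (hrank : (X 0).rank = r)
    (hrec : ∀ t : ℕ,
      X (t + 1) = X t - (1 / 2 : ℝ) • ((X t * (X t)ᵀ - A) * X t * ((X t)ᵀ * X t)⁻¹))
    (hinit1 : kthEig A r / 3 ≤ kthEig (X 0 * (X 0)ᵀ) r)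
    (hinit2 : frobNorm (X 0 * (X 0)ᵀ - A) ≤ 2 / (3 * κ ^ 2)) :
    ∀ t : ℕ,
      frobNorm (X (t + 1) * (X (t + 1))ᵀ - A)
        ≤ 4 / (3 * κ ^ 2) * (1 / 2 ^ 2 ^ (t + 1)) := by
  have hDt : (diagonal d)ᵀ = diagonal d := diagonal_transpose d
  have hDpsd : ∀ y, 0 ≤ y ⬝ᵥ (diagonal d *ᵥ y) := by
    intro y
    simp only [dotProduct, mulVec_diagonal]
    exact Finset.sum_nonneg fun i _ => by nlinarith [mul_nonneg (hd i).le (mul_self_nonneg (y i))]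
  have hDs : ∀ y, kthEig A r * (y ⬝ᵥ y) ≤ y ⬝ᵥ (diagonal d *ᵥ y) := by
    intro y
    rw [hA]
    exact kthEig_le Q hQ _ hDpsd y
  have hquad : ∀ x : Fin r → ℝ, (∑ i, (Q *ᵥ x) i ^ 2 = x ⬝ᵥ x) ∧
      (∑ i, (Q *ᵥ x) i * (A *ᵥ (Q *ᵥ x)) i = x ⬝ᵥ (diagonal d *ᵥ x)) := by
    intro x
    constructor
    · have : ∑ i, (Q *ᵥ x) i ^ 2 = (Q *ᵥ x) ⬝ᵥ (Q *ᵥ x) := by simp [dotProduct, sq]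
      rw [this, dotProduct_mulVec, ← mulVec_transpose, mulVec_mulVec, hQ, one_mulVec]
    · change (Q *ᵥ x) ⬝ᵥ (A *ᵥ (Q *ᵥ x)) = _
      have : A *ᵥ (Q *ᵥ x) = Q *ᵥ (diagonal d *ᵥ x) := by
        rw [hA, mulVec_mulVec, Matrix.mul_assoc, hQ, Matrix.mul_one, mulVec_mulVec]
      rw [this, dotProduct_mulVec, ← mulVec_transpose, mulVec_mulVec, hQ, one_mulVec]
  have hQinj : Function.Injective (Matrix.mulVecLin Q) := by
    intro x y hxy
    have hxy' : Q *ᵥ x = Q *ᵥ y := hxy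
    have := congrArg (fun z => Qᵀ *ᵥ z) hxy'
    simpa [mulVec_mulVec, hQ] using this
  let i0 : Fin r := ⟨0, hr⟩
  let il : Fin r := ⟨r - 1, by omega⟩
  have he : ∀ i : Fin r, (Pi.single i (1:ℝ) : Fin r → ℝ) ⬝ᵥ (diagonal d *ᵥ Pi.single i 1) = d i := by
    intro i
    simp
  -- s ≤ d i0
  have hs0 : kthEig A r ≤ d i0 := by
    have := hDs (Pi.single i0 1)
    rw [he] at this
    simpa using this
  have hd0 : d i0 ≤ 1 := by
    rw [← hσ1]
    apply le_csSup
    · by_contra hb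
      have := Real.sSup_of_not_bddAbove hb
      change kthEig A 1 = 0 at this
      rw [hσ1] at this
      norm_num at this
    · refine ⟨Submodule.span ℝ {Q *ᵥ Pi.single i0 1}, ?_, ?_⟩
      · apply finrank_span_singleton
        intro h0
        have := (hquad (Pi.single i0 1)).1
        rw [h0] at this
        simp at this
      · intro x hx
        obtain ⟨a, rfl⟩ := Submodule.mem_span_singleton.mp hx
        rw [← mulVec_smul, (hquad _).1, (hquad _).2]
        simp only [mulVec_smul, dotProduct_smul, smul_dotProduct, he]
        simp
        apply le_of_eq
        ring
  have hspos : 0 < kthEig A r := by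
    refine lt_of_lt_of_le (hd il) ?_
    apply le_csSup
    · refine ⟨d i0, ?_⟩
      rintro c ⟨V, hV, h⟩
      rw [hA] at h
      have := kth_le Q hQ _ hDpsd c V hV h (Pi.single i0 1)
      rw [he] at this
      simpa using this
    · refine ⟨LinearMap.range (Matrix.mulVecLin Q), ?_, ?_⟩
      · rw [LinearMap.finrank_range_of_inj hQinj]; simp
      · rintro _ ⟨x, rfl⟩
        simp only [mulVecLin_apply]
        rw [(hquad _).1, (hquad _).2]
        simp only [dotProduct, mulVec_diagonal, Finset.mul_sum]
        apply Finset.sum_le_sum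
        intro i _
        have : d il ≤ d i := hdmono i il (by change i.1 ≤ r - 1; omega)
        nlinarith [mul_le_mul_of_nonneg_right this (mul_self_nonneg (x i))]
  generalize hs : kthEig A r = s at *
  have hs1 : s ≤ 1 := hs0.trans hd0
  have hκs : ∀ c : ℝ, c / (3 * κ ^ 2) = c / 3 * s ^ 2 := by
    intro c
    rw [hκ]; field_simp
  rw [hκs] at hinit2
  have hXQ : ∀ Φ : Matrix (Fin r) (Fin r) ℝ, Q * Φ * (Q * Φ)ᵀ - A =
      Q * (Φ * Φᵀ - diagonal d) * Qᵀ := by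
    intro Φ
    rw [hA, transpose_mul, Matrix.mul_sub, Matrix.sub_mul]
    simp only [Matrix.mul_assoc]
  have hform : ∀ (Φ : Matrix (Fin r) (Fin r) ℝ) y, y ⬝ᵥ ((Φ * Φᵀ) *ᵥ y) = (Φᵀ *ᵥ y) ⬝ᵥ (Φᵀ *ᵥ y) := by
    intro Φ y
    rw [← mulVec_mulVec, dotProduct_mulVec, mulVec_transpose]
  have key : ∀ t, ∃ Φ : Matrix (Fin r) (Fin r) ℝ, X t = Q * Φ ∧
      (∀ y, s / 3 * (y ⬝ᵥ y) ≤ (Φᵀ *ᵥ y) ⬝ᵥ (Φᵀ *ᵥ y)) ∧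
      frobNorm (Φ * Φᵀ - diagonal d) ≤ 4 / 3 * s ^ 2 * (1 / 2 ^ 2 ^ t) := by
    intro t
    induction t with
    | zero =>
      have hX0' : X 0 = Q * (diagonal d * Qᵀ * Ω) := by
        rw [hX0, hA]; simp only [Matrix.mul_assoc]
      refine ⟨_, hX0', ?_, ?_⟩
      · intro y
        generalize diagonal d * Qᵀ * Ω = Φ at hX0'
        have e : X 0 * (X 0)ᵀ = Q * (Φ * Φᵀ) * Qᵀ := by
          rw [hX0', transpose_mul]; simp only [Matrix.mul_assoc]
        rw [e] at hinit1
        have := kthEig_le Q hQ (Φ * Φᵀ) (fun y => by rw [hform]; exact dp_nonneg _) y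
        rw [hform] at this
        exact (mul_le_mul_of_nonneg_right hinit1 (dp_nonneg y)).trans this
      · rw [hX0', hXQ, frob_conj Q hQ] at hinit2
        refine hinit2.trans (le_of_eq ?_)
        norm_num
        ring
    | succ t ih =>
      obtain ⟨Φ, hX, hlow, hfr⟩ := ih
      have hU := unit_of_bound Φ (s / 3) (by positivity) hlow
      have hst := step_eq Φ (diagonal d) hDt hU _ rfl
      set Ψ := Φ - (1 / 2 : ℝ) • ((Φ * Φᵀ - diagonal d) * Φ * (Φᵀ * Φ)⁻¹) with hΨ
      refine ⟨Ψ, ?_, ?_, ?_⟩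
      · rw [hrec t, hX, hXQ, hΨ, Matrix.mul_sub Q Φ, Matrix.mul_smul, transpose_mul Q Φ]
        have e1 : Φᵀ * Qᵀ * (Q * Φ) = Φᵀ * Φ := by
          rw [Matrix.mul_assoc, ← Matrix.mul_assoc Qᵀ, hQ, Matrix.one_mul]
        have e2 : ∀ E : Matrix (Fin r) (Fin r) ℝ, Q * E * Qᵀ * (Q * Φ) = Q * (E * Φ) := by
          intro E
          rw [Matrix.mul_assoc, ← Matrix.mul_assoc Qᵀ, hQ, Matrix.one_mul, Matrix.mul_assoc]
        rw [e1, e2]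
        simp only [Matrix.mul_assoc]
      · intro y
        rw [← hform, hst, add_mulVec, dotProduct_add, smul_mulVec, dotProduct_smul]
        set G := Φ⁻¹ * (Φ * Φᵀ - diagonal d)
        have h1 : 0 ≤ y ⬝ᵥ ((Gᵀ * G) *ᵥ y) := by
          have := hform Gᵀ y
          rw [transpose_transpose] at this
          rw [this]; exact dp_nonneg _
        have h2 := hDs y
        have h3 := mul_nonneg hspos.le (dp_nonneg y)
        simp only [smul_eq_mul]
        linarith
      · rw [hst, add_sub_cancel_left]
        have h1 := step_frob Φ (Φ * Φᵀ - diagonal d) hU (s / 3) (by positivity) hlow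
        have h2 := pow_le_pow_left₀ (frob_nonneg _) hfr 2
        have e : (4 / 3 * s ^ 2 * (1 / 2 ^ 2 ^ t)) ^ 2 = 16 / 9 * s ^ 4 * (1 / 2 ^ 2 ^ (t + 1)) := by
          rw [pow_succ 2 t, pow_mul 2 (2 ^ t) 2]
          ring
        rw [e] at h2
        have hq : (0:ℝ) < 1 / 2 ^ 2 ^ (t + 1) := by positivity
        set q : ℝ := 1 / 2 ^ 2 ^ (t + 1)
        refine le_of_mul_le_mul_left (a := s / 3) ?_ (by positivity)
        refine (h1.trans (mul_le_mul_of_nonneg_left h2 (by norm_num))).trans ?_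
        have : s ^ 3 * q * s ≤ s ^ 3 * q * 1 := mul_le_mul_of_nonneg_left hs1 (by positivity)
        nlinarith
  intro t
  obtain ⟨Φ, hX, -, hf⟩ := key (t + 1)
  rw [hX, hXQ, frob_conj Q hQ, hκs]
  exact hf
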